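/- The map Φ sending (τ, u, v, w) ∈ H_d × M_{1,d}(ℂ) × M_{d,1}(ℂ) × ℂ to the column span of the (2d+2)×(d+1) block matrix with block rows (u, w), (τ, v), (1_d, 0), (0, 1) is injective, and its image is exactly the set of ℂ-subspaces F ⊆ ℂ^{2d+2} satisfying: (i) F ∩ ℂ·e₀ = {0}; (ii) F + W = ℂ^{2d+2}; (iii) the image of F ∩ W under π belongs to D_Ψ. (This is Proposition 4.1 of the paper, parametrising the set D of mixed Hodge structures by H_d × M_{1,d}(ℂ) × M_{d,1}(ℂ) × ℂ.) -/

import Mathlib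

open Matrix Complex

noncomputable section

/-- `ℂ^{2d}`. -/
abbrev Vd (d : ℕ) := (Fin d ⊕ Fin d) → ℂ

/-- Index set for `ℂ^{2d+2}`: the coordinate `e₀` is `Sum.inl ()`, the middle `2d`
coordinates are the `Sum.inr (Sum.inl _)` ones, and `e_{2d+1}` is `Sum.inr (Sum.inr ())`. -/
abbrev Idx (d : ℕ) := Unit ⊕ ((Fin d ⊕ Fin d) ⊕ Unit)

/-- `ℂ^{2d+2}`. -/
abbrev V2 (d : ℕ) := Idx d → ℂ

/-- The matrix `J = [[0, -1_d],[1_d, 0]]`. -/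
def Jmat (d : ℕ) : Matrix (Fin d ⊕ Fin d) (Fin d ⊕ Fin d) ℝ :=
  Matrix.fromBlocks 0 (-1) 1 0

/-- The bilinear form `ω(x,y) = xᵀ · J · y` on `ℂ^{2d}`. -/
def omegaC (d : ℕ) (x y : Vd d) : ℂ :=
  x ⬝ᵥ (((Jmat d).map (fun r : ℝ => (r : ℂ))) *ᵥ y)

/-- The set `D_Ψ`. -/
def DPsi (d : ℕ) : Set (Submodule ℂ (Vd d)) :=
  {F | Module.finrank ℂ F = d ∧
       (∀ x ∈ F, ∀ y ∈ F, omegaC d x y = 0) ∧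
       (∀ v ∈ F, v ≠ 0 →
         ∃ r : ℝ, 0 < r ∧
           Complex.I * omegaC d v (fun i => (starRingEnd ℂ) (v i)) = (r : ℂ))}

/-- The Siegel half space `H_d`. -/
def Siegel (d : ℕ) : Set (Matrix (Fin d) (Fin d) ℂ) :=
  {τ | τᵀ = τ ∧ (τ.map Complex.im).PosDef}

/-- The standard basis vector `e₀` of `ℂ^{2d+2}`. -/
def e0 (d : ℕ) : V2 d := fun i => if i = Sum.inl () then 1 else 0

/-- The subspace `W ⊆ ℂ^{2d+2}` spanned by `e₀, …, e_{2d}`, i.e. where the last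
coordinate vanishes. -/
def Wsub (d : ℕ) : Submodule ℂ (V2 d) :=
  LinearMap.ker (LinearMap.proj (Sum.inr (Sum.inr ())) : V2 d →ₗ[ℂ] ℂ)

/-- The projection `π : ℂ^{2d+2} → ℂ^{2d}` forgetting the `e₀`-coordinate (and the
last coordinate); on `W` it is the projection of the statement. -/
def projW (d : ℕ) : V2 d →ₗ[ℂ] Vd d :=
  LinearMap.funLeft ℂ ℂ (fun j => Sum.inr (Sum.inl j))

/-- The `(2d+2) × (d+1)` block matrix with block rows `(u, w)`, `(τ, v)`, `(1_d, 0)`,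
`(0, 1)`. -/
def colMat (d : ℕ) (τ : Matrix (Fin d) (Fin d) ℂ) (u : Fin d → ℂ) (v : Fin d → ℂ)
    (w : ℂ) : Matrix (Idx d) (Fin d ⊕ Unit) ℂ :=
  Matrix.of fun i k =>
    match i, k with
    | Sum.inl _, Sum.inl j => u j
    | Sum.inl _, Sum.inr _ => w
    | Sum.inr (Sum.inl (Sum.inl i)), Sum.inl j => τ i j
    | Sum.inr (Sum.inl (Sum.inl i)), Sum.inr _ => v i
    | Sum.inr (Sum.inl (Sum.inr i)), Sum.inl j => if i = j then 1 else 0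
    | Sum.inr (Sum.inl (Sum.inr _)), Sum.inr _ => 0
    | Sum.inr (Sum.inr _), Sum.inl _ => 0
    | Sum.inr (Sum.inr _), Sum.inr _ => 1

/-- `Φ(τ,u,v,w)`: the column span of the above block matrix. -/
def Phi (d : ℕ) (τ : Matrix (Fin d) (Fin d) ℂ) (u : Fin d → ℂ) (v : Fin d → ℂ)
    (w : ℂ) : Submodule ℂ (V2 d) :=
  LinearMap.range (colMat d τ u v w).mulVecLin

/-!
Reordering coordinates, `Φ(τ, u, v, w)` is the graph of the matrix with block rows `(u, w)` and
`(τ, v)`, so it determines that matrix, and `π(Φ(τ, u, v, w) ∩ W)` is the graph of `τ`. On vectors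
`(τa, a)` and `(τb, b)` of the latter, `ω` takes the value `aᵀτb - (τa)ᵀb`, and `i·ω(v, v̄)` is
`2 Im(āᵀτa)` for `v = (τa, a)`; hence the graph of `τ` lies in `D_Ψ` exactly when `τ ∈ H_d`.

Conversely, a member of `D_Ψ` contains no nonzero vector `(x, 0)`, because `ω` vanishes on such a
vector and its conjugate; for dimension reasons it is a graph. If this holds for `π(F ∩ W)`,
conditions (i) and (ii) say that `F` projects isomorphically onto its last `d + 1` coordinates,
and is therefore itself a graph.
-/

section MatrixGraph

variable {R m n : Type*} [Fintype n]

/-- The graph `{f | f ∘ inl = A *ᵥ (f ∘ inr)}` of a matrix, with the dependent coordinates placed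
first, so that it is the column span of the block matrix with block rows `A` and `1`. -/
def matrixGraph [CommSemiring R] (A : Matrix m n R) : Submodule R (m ⊕ n → R) :=
  A.mulVecLin.graph.comap ((LinearMap.funLeft R R Sum.inr).prod (LinearMap.funLeft R R Sum.inl))

theorem mem_matrixGraph [CommSemiring R] {A : Matrix m n R} {f : m ⊕ n → R} :
    f ∈ matrixGraph A ↔ f ∘ Sum.inl = A *ᵥ (f ∘ Sum.inr) :=
  Iff.rfl

theorem sumElim_mem_matrixGraph [CommSemiring R] (A : Matrix m n R) (a : n → R) :
    Sum.elim (A *ᵥ a) a ∈ matrixGraph A :=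
  rfl

theorem forall_mem_matrixGraph [CommSemiring R] {A : Matrix m n R} {p : (m ⊕ n → R) → Prop} :
    (∀ f ∈ matrixGraph A, p f) ↔ ∀ a, p (Sum.elim (A *ᵥ a) a) := by
  refine ⟨fun h a => h _ (sumElim_mem_matrixGraph A a), fun h f hf => ?_⟩
  rw [← Sum.elim_comp_inl_inr f, mem_matrixGraph.1 hf]
  exact h _

theorem matrixGraph_injective [CommSemiring R] :
    Function.Injective (matrixGraph : Matrix m n R → Submodule R (m ⊕ n → R)) := by
  intro A B h
  refine mulVec_injective (funext fun a => ?_)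
  exact mem_matrixGraph.1 (h ▸ sumElim_mem_matrixGraph A a)

theorem range_mulVecLin_fromRows_one [CommSemiring R] [DecidableEq n] (A : Matrix m n R) :
    LinearMap.range (fromRows A 1).mulVecLin = matrixGraph A := by
  refine le_antisymm ?_ (forall_mem_matrixGraph.2 fun a => ⟨a, ?_⟩)
  · rintro _ ⟨a, rfl⟩
    simp [mem_matrixGraph, fromRows_mulVec]
  · simp [fromRows_mulVec]

theorem finrank_matrixGraph [CommSemiring R] [StrongRankCondition R] (A : Matrix m n R) :
    Module.finrank R (matrixGraph A) = Fintype.card n := by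
  classical
  have inj : Function.Injective (fromRows A (1 : Matrix n n R)).mulVecLin := fun a b h => by
    simpa [fromRows_mulVec] using congrArg (· ∘ Sum.inr) h
  rw [← range_mulVecLin_fromRows_one, LinearMap.finrank_range_of_inj inj,
    Module.finrank_fintype_fun_eq_card]

theorem exists_matrixGraph_eq [CommRing R] {F : Submodule R (m ⊕ n → R)}
    (inj : ∀ f ∈ F, f ∘ Sum.inr = 0 → f = 0) (surj : ∀ a : n → R, ∃ f ∈ F, f ∘ Sum.inr = a) :
    ∃ A : Matrix m n R, matrixGraph A = F := by
  classical
  let base : F →ₗ[R] n → R := (LinearMap.funLeft R R Sum.inr).domRestrict F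
  have base_bijective : Function.Bijective base :=
    ⟨(injective_iff_map_eq_zero base).2 fun f hf => Subtype.ext (inj f f.2 hf),
      fun a => let ⟨f, hf, hfa⟩ := surj a; ⟨⟨f, hf⟩, hfa⟩⟩
  let lift : (n → R) ≃ₗ[R] F := (LinearEquiv.ofBijective base base_bijective).symm
  have lift_inr (a : n → R) : (lift a : m ⊕ n → R) ∘ Sum.inr = a :=
    (LinearEquiv.ofBijective base base_bijective).apply_symm_apply a
  have lift_base (f : F) : lift ((f : m ⊕ n → R) ∘ Sum.inr) = f :=
    (LinearEquiv.ofBijective base base_bijective).symm_apply_apply f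
  let A := LinearMap.toMatrix' (LinearMap.funLeft R R Sum.inl ∘ₗ F.subtype ∘ₗ lift.toLinearMap)
  have A_mulVec (a : n → R) : A *ᵥ a = (lift a : m ⊕ n → R) ∘ Sum.inl :=
    LinearMap.toMatrix'_mulVec _ a
  refine ⟨A, le_antisymm (forall_mem_matrixGraph.2 fun a => ?_) fun f hf => ?_⟩
  · have : Sum.elim (A *ᵥ a) a = lift a := by
      rw [A_mulVec, ← Sum.elim_comp_inl_inr (lift a : m ⊕ n → R), lift_inr]
      simp
    exact this ▸ (lift a).2
  · rw [mem_matrixGraph, A_mulVec, lift_base ⟨f, hf⟩]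

end MatrixGraph

section SymmetricMatrix

variable {n : Type*} [Fintype n] {τ : Matrix n n ℂ}

theorem im_star_dotProduct_mulVec (hτ : τ.IsSymm) (a : n → ℂ) :
    (star a ⬝ᵥ τ *ᵥ a).im =
      (re ∘ a) ⬝ᵥ τ.map im *ᵥ (re ∘ a) + (im ∘ a) ⬝ᵥ τ.map im *ᵥ (im ∘ a) := by
  let p : n → ℂ := fun i => (a i).re
  let q : n → ℂ := fun i => (a i).im
  have decomp : a = p + I • q := funext fun i => by simp [p, q, mul_comm I]
  have star_decomp : star a = p - I • q := funext fun i => by simp [p, q, Complex.ext_iff]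
  have cross : p ⬝ᵥ τ *ᵥ q = q ⬝ᵥ τ *ᵥ p := by
    conv_lhs => rw [← hτ.eq, dotProduct_transpose_mulVec]
  have im_real (x : n → ℝ) : (((↑) ∘ x : n → ℂ) ⬝ᵥ τ *ᵥ ((↑) ∘ x)).im = x ⬝ᵥ τ.map im *ᵥ x := by
    simp [dotProduct, mulVec]
  have quadratic_eq : star a ⬝ᵥ τ *ᵥ a = p ⬝ᵥ τ *ᵥ p + q ⬝ᵥ τ *ᵥ q := by
    rw [star_decomp]
    conv_lhs => rw [decomp]
    simp only [mulVec_add, mulVec_smul, dotProduct_add, sub_dotProduct, dotProduct_smul,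
      smul_dotProduct, smul_eq_mul, cross]
    linear_combination -(q ⬝ᵥ τ *ᵥ q) * I_mul_I
  rw [quadratic_eq, add_im]
  exact congrArg₂ (· + ·) (im_real (re ∘ a)) (im_real (im ∘ a))

theorem posDef_map_im_iff (hτ : τ.IsSymm) :
    (τ.map im).PosDef ↔ ∀ a, a ≠ 0 → 0 < (star a ⬝ᵥ τ *ᵥ a).im := by
  simp only [im_star_dotProduct_mulVec hτ]
  constructor
  · intro hpos a ha
    have nonneg (x : n → ℝ) : 0 ≤ x ⬝ᵥ τ.map im *ᵥ x := by
      simpa using hpos.posSemidef.dotProduct_mulVec_nonneg x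
    have pos {x : n → ℝ} (hx : x ≠ 0) : 0 < x ⬝ᵥ τ.map im *ᵥ x := by
      simpa using hpos.dotProduct_mulVec_pos hx
    by_cases hre : re ∘ a = 0
    · have him : im ∘ a ≠ 0 := fun him =>
        ha (funext fun i => Complex.ext (congrFun hre i) (congrFun him i))
      exact add_pos_of_nonneg_of_pos (nonneg _) (pos him)
    · exact add_pos_of_pos_of_nonneg (pos hre) (nonneg _)
  · intro hpos
    refine .of_dotProduct_mulVec_pos (hτ.map im) fun x hx => ?_
    have := hpos (fun i => (x i : ℂ)) fun h => hx (funext fun i => ofReal_eq_zero.1 (congrFun h i))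
    simpa [Function.comp_def, ← Pi.zero_def] using this

end SymmetricMatrix

section Siegel

variable {d : ℕ}

theorem omegaC_eq (x y : Vd d) :
    omegaC d x y = (x ∘ Sum.inr) ⬝ᵥ (y ∘ Sum.inl) - (x ∘ Sum.inl) ⬝ᵥ (y ∘ Sum.inr) := by
  have map_Jmat : (Jmat d).map ((↑) : ℝ → ℂ) = fromBlocks 0 (-1) 1 0 := by
    simp [Jmat, fromBlocks_map, Matrix.map_neg, Matrix.map_one]
  rw [omegaC, map_Jmat, fromBlocks_mulVec, ← Sum.elim_comp_inl_inr x, sumElim_dotProduct_sumElim]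
  simp [neg_mulVec]
  ring

theorem matrixGraph_isotropic_iff {τ : Matrix (Fin d) (Fin d) ℂ} :
    (∀ x ∈ matrixGraph τ, ∀ y ∈ matrixGraph τ, omegaC d x y = 0) ↔ τ.IsSymm := by
  simp only [forall_mem_matrixGraph, omegaC_eq, Sum.elim_comp_inl, Sum.elim_comp_inr, sub_eq_zero]
  constructor
  · intro h
    ext i j
    simpa using (h (Pi.single i 1) (Pi.single j 1)).symm
  · intro h a b
    rw [dotProduct_mulVec, ← mulVec_transpose, h.eq]

theorem I_mul_omegaC_conj (τ : Matrix (Fin d) (Fin d) ℂ) (a : Fin d → ℂ) :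
    I * omegaC d (Sum.elim (τ *ᵥ a) a) (fun i => starRingEnd ℂ (Sum.elim (τ *ᵥ a) a i)) =
      ((2 * (star a ⬝ᵥ τ *ᵥ a).im : ℝ) : ℂ) := by
  have conj_value : a ⬝ᵥ star (τ *ᵥ a) = starRingEnd ℂ (star a ⬝ᵥ τ *ᵥ a) := by
    rw [dotProduct_star, dotProduct_comm, starRingEnd_apply]
  calc _ = I * (a ⬝ᵥ star (τ *ᵥ a) - (τ *ᵥ a) ⬝ᵥ star a) := by rw [omegaC_eq]; rfl
    _ = I * -(star a ⬝ᵥ τ *ᵥ a - starRingEnd ℂ (star a ⬝ᵥ τ *ᵥ a)) := by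
      rw [conj_value, dotProduct_comm _ (star a), neg_sub]
    _ = _ := by
      rw [sub_conj]
      push_cast
      linear_combination (-2 * (star a ⬝ᵥ τ *ᵥ a).im : ℂ) * I_mul_I

theorem mem_Siegel_iff {τ : Matrix (Fin d) (Fin d) ℂ} :
    τ ∈ Siegel d ↔ τ.IsSymm ∧ ∀ a, a ≠ 0 → 0 < (star a ⬝ᵥ τ *ᵥ a).im :=
  and_congr_right fun hτ => posDef_map_im_iff hτ

theorem matrixGraph_mem_DPsi_iff {τ : Matrix (Fin d) (Fin d) ℂ} :
    matrixGraph τ ∈ DPsi d ↔ τ ∈ Siegel d := by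
  have ne_zero_iff (a : Fin d → ℂ) : Sum.elim (τ *ᵥ a) a ≠ 0 ↔ a ≠ 0 := by
    refine not_congr ⟨fun h => congrArg (· ∘ Sum.inr) h, ?_⟩
    rintro rfl
    simp
  have exists_pos_iff (x : ℝ) : (∃ r : ℝ, 0 < r ∧ ((2 * x : ℝ) : ℂ) = r) ↔ 0 < x := by
    simp only [ofReal_inj, exists_eq_right', Nat.ofNat_pos, mul_pos_iff_of_pos_left]
  rw [mem_Siegel_iff, ← matrixGraph_isotropic_iff]
  simp only [DPsi, Set.mem_ofPred_eq, finrank_matrixGraph, Fintype.card_fin, true_and,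
    forall_mem_matrixGraph, I_mul_omegaC_conj, ne_zero_iff, exists_pos_iff]

theorem exists_matrixGraph_eq_of_mem_DPsi {G : Submodule ℂ (Vd d)} (hG : G ∈ DPsi d) :
    ∃ τ, matrixGraph τ = G := by
  obtain ⟨finrank_eq, -, pos⟩ := hG
  let base : G →ₗ[ℂ] Fin d → ℂ := (LinearMap.funLeft ℂ ℂ Sum.inr).domRestrict G
  have inj (g : Vd d) (hg : g ∈ G) (h : g ∘ Sum.inr = 0) : g = 0 := by
    by_contra hne
    obtain ⟨r, hr, hω⟩ := pos g hg hne
    have conj_inr : (fun i => starRingEnd ℂ (g i)) ∘ Sum.inr = 0 :=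
      funext fun i => (congrArg (starRingEnd ℂ) (congrFun h i)).trans (map_zero _)
    rw [omegaC_eq, h, conj_inr, zero_dotProduct, dotProduct_zero, sub_zero, mul_zero] at hω
    exact hr.ne (ofReal_injective hω)
  have base_injective : Function.Injective base :=
    (injective_iff_map_eq_zero base).2 fun g hg => Subtype.ext (inj g g.2 hg)
  have base_surjective : Function.Surjective base :=
    (LinearMap.injective_iff_surjective_of_finrank_eq_finrank (by simp [finrank_eq])).1
      base_injective
  exact exists_matrixGraph_eq inj fun a =>
    let ⟨g, hg⟩ := base_surjective a; ⟨g, g.2, hg⟩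

end Siegel

section Phi

variable {d : ℕ}

/-- Reorders the coordinates of `ℂ^{2d+2}` so that the first `d + 1` of them come first; the other
`d + 1` are those on which the matrix defining `Φ` is the identity. -/
def idxEquiv (d : ℕ) : (Unit ⊕ Fin d) ⊕ (Fin d ⊕ Unit) ≃ Idx d :=
  (Equiv.sumAssoc _ _ _).trans ((Equiv.refl _).sumCongr (Equiv.sumAssoc _ _ _).symm)

/-- The matrix with block rows `(u, w)` and `(τ, v)`, whose graph is `Φ(τ, u, v, w)`. -/
def topBlock (τ : Matrix (Fin d) (Fin d) ℂ) (u v : Fin d → ℂ) (w : ℂ) :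
    Matrix (Unit ⊕ Fin d) (Fin d ⊕ Unit) ℂ :=
  fromBlocks (replicateRow Unit u) (of fun _ _ => w) τ (replicateCol Unit v)

theorem topBlock_inj {τ τ' : Matrix (Fin d) (Fin d) ℂ} {u v u' v' : Fin d → ℂ} {w w' : ℂ} :
    topBlock τ u v w = topBlock τ' u' v' w' ↔ τ = τ' ∧ u = u' ∧ v = v' ∧ w = w' := by
  have corner : (of fun _ _ => w : Matrix Unit Unit ℂ) = of (fun _ _ => w') ↔ w = w' :=
    ⟨fun h => congrFun (congrFun h ()) (), fun h => h ▸ rfl⟩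
  rw [topBlock, topBlock, fromBlocks_inj, replicateRow_inj, replicateCol_inj, corner]
  tauto

theorem exists_topBlock_eq (A : Matrix (Unit ⊕ Fin d) (Fin d ⊕ Unit) ℂ) :
    ∃ τ u v w, topBlock τ u v w = A :=
  ⟨A.toBlocks₂₁, A.toBlocks₁₁ (), fun i => A.toBlocks₂₂ i (), A.toBlocks₁₂ () (),
    A.fromBlocks_toBlocks⟩

theorem Phi_eq_comap (τ : Matrix (Fin d) (Fin d) ℂ) (u v : Fin d → ℂ) (w : ℂ) :
    Phi d τ u v w =
      (matrixGraph (topBlock τ u v w)).comap (LinearMap.funLeft ℂ ℂ (idxEquiv d)) := by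
  have fromRows_eq :
      fromRows (topBlock τ u v w) 1 = (colMat d τ u v w).submatrix (idxEquiv d) id := by
    ext ((_ | i) | (i | _)) (j | _) <;>
      simp [topBlock, idxEquiv, colMat, one_apply]
  ext f
  simp only [← range_mulVecLin_fromRows_one, fromRows_eq, Phi, Submodule.mem_comap,
    LinearMap.mem_range]
  exact exists_congr fun a => (idxEquiv d).surjective.injective_comp_right.eq_iff.symm

theorem mem_Phi_iff {τ : Matrix (Fin d) (Fin d) ℂ} {u v : Fin d → ℂ} {w : ℂ} {f : V2 d} :
    f ∈ Phi d τ u v w ↔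
      f (Sum.inl ()) = u ⬝ᵥ (projW d f ∘ Sum.inr) + w * f (Sum.inr (Sum.inr ())) ∧
      projW d f ∘ Sum.inl = τ *ᵥ (projW d f ∘ Sum.inr) + f (Sum.inr (Sum.inr ())) • v := by
  rw [Phi_eq_comap, Submodule.mem_comap, mem_matrixGraph, topBlock, fromBlocks_mulVec]
  simp [funext_iff, Unique.forall_iff, idxEquiv, projW, LinearMap.funLeft_apply, mulVec, dotProduct,
    mul_comm]

theorem Phi_inj {τ τ' : Matrix (Fin d) (Fin d) ℂ} {u v u' v' : Fin d → ℂ} {w w' : ℂ} :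
    Phi d τ u v w = Phi d τ' u' v' w' ↔ τ = τ' ∧ u = u' ∧ v = v' ∧ w = w' := by
  have comap_injective :
      Function.Injective (Submodule.comap (LinearMap.funLeft ℂ ℂ (idxEquiv d))) :=
    Submodule.comap_injective_of_surjective
      (LinearMap.funLeft_surjective_of_injective ℂ ℂ _ (idxEquiv d).injective)
  rw [Phi_eq_comap, Phi_eq_comap, comap_injective.eq_iff, matrixGraph_injective.eq_iff,
    topBlock_inj]

theorem map_projW_Phi_inf_Wsub (τ : Matrix (Fin d) (Fin d) ℂ) (u v : Fin d → ℂ) (w : ℂ) :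
    (Phi d τ u v w ⊓ Wsub d).map (projW d) = matrixGraph τ := by
  refine le_antisymm ?_ fun g hg => ?_
  · rintro _ ⟨f, ⟨hf, hfW : f (Sum.inr (Sum.inr ())) = 0⟩, rfl⟩
    simpa [mem_matrixGraph, hfW] using (mem_Phi_iff.1 hf).2
  · let f : V2 d := Sum.elim (fun _ => u ⬝ᵥ (g ∘ Sum.inr)) (Sum.elim g 0)
    have projW_f : projW d f = g := rfl
    have f_last : f (Sum.inr (Sum.inr ())) = 0 := rfl
    refine ⟨f, ⟨mem_Phi_iff.2 ⟨?_, ?_⟩, f_last⟩, projW_f⟩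
    · simp [f, projW_f]
    · simpa [f_last, projW_f] using mem_matrixGraph.1 hg

theorem sup_Wsub_eq_top_iff {F : Submodule ℂ (V2 d)} :
    F ⊔ Wsub d = ⊤ ↔ ∀ b, ∃ f ∈ F, f (Sum.inr (Sum.inr ())) = b := by
  rw [Wsub, ← LinearMap.map_eq_top_iff, Submodule.eq_top_iff']
  · rfl
  · exact LinearMap.range_eq_top.2 (Function.surjective_eval _)

theorem mem_span_e0_iff {f : V2 d} :
    f ∈ Submodule.span ℂ {e0 d} ↔ projW d f = 0 ∧ f (Sum.inr (Sum.inr ())) = 0 := by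
  rw [Submodule.mem_span_singleton]
  constructor
  · rintro ⟨c, rfl⟩
    exact ⟨funext fun i => by simp [projW, e0, LinearMap.funLeft_apply], by simp [e0]⟩
  · rintro ⟨hproj, hlast⟩
    refine ⟨f (Sum.inl ()), funext ?_⟩
    rintro (_ | i | _)
    · simp [e0]
    · have : f (Sum.inr (Sum.inl i)) = 0 := congrFun hproj i
      simp [e0, this]
    · simp [e0, hlast]

theorem inf_span_e0_eq_bot_iff {F : Submodule ℂ (V2 d)} :
    F ⊓ Submodule.span ℂ {e0 d} = ⊥ ↔
      ∀ f ∈ F, projW d f = 0 → f (Sum.inr (Sum.inr ())) = 0 → f = 0 := by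
  simp only [← disjoint_iff, Submodule.disjoint_def, mem_span_e0_iff, and_imp]

theorem Phi_inf_span_e0 (τ : Matrix (Fin d) (Fin d) ℂ) (u v : Fin d → ℂ) (w : ℂ) :
    Phi d τ u v w ⊓ Submodule.span ℂ {e0 d} = ⊥ := by
  refine inf_span_e0_eq_bot_iff.2 fun f hf hproj hlast => funext ?_
  rintro (_ | i | _)
  · simpa [hproj, hlast] using (mem_Phi_iff.1 hf).1
  · exact congrFun hproj i
  · exact hlast

theorem Phi_sup_Wsub (τ : Matrix (Fin d) (Fin d) ℂ) (u v : Fin d → ℂ) (w : ℂ) :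
    Phi d τ u v w ⊔ Wsub d = ⊤ := by
  refine sup_Wsub_eq_top_iff.2 fun b => ⟨colMat d τ u v w *ᵥ Sum.elim 0 (fun _ => b), ⟨_, rfl⟩, ?_⟩
  simp [colMat, mulVec, dotProduct]

theorem exists_Phi_eq {F : Submodule ℂ (V2 d)} (h_e0 : F ⊓ Submodule.span ℂ {e0 d} = ⊥)
    (hW : F ⊔ Wsub d = ⊤) {τ₀ : Matrix (Fin d) (Fin d) ℂ}
    (hτ₀ : (F ⊓ Wsub d).map (projW d) = matrixGraph τ₀) :
    ∃ τ u v w, Phi d τ u v w = F := by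
  let e := LinearEquiv.funCongrLeft ℂ ℂ (idxEquiv d)
  have e_inr (f : V2 d) : e f ∘ Sum.inr =
      Sum.elim (projW d f ∘ Sum.inr) fun _ => f (Sum.inr (Sum.inr ())) :=
    funext (by rintro (_ | _) <;> rfl)
  have inj : ∀ g ∈ F.map e.toLinearMap, g ∘ Sum.inr = 0 → g = 0 := by
    rintro _ ⟨f, hf, rfl⟩ h
    rw [LinearEquiv.coe_coe, e_inr] at h
    have f_last : f (Sum.inr (Sum.inr ())) = 0 := congrFun h (Sum.inr ())
    have f_inr : projW d f ∘ Sum.inr = 0 := congrArg (· ∘ Sum.inl) h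
    have f_inl : projW d f ∘ Sum.inl = τ₀ *ᵥ (projW d f ∘ Sum.inr) :=
      hτ₀.le (Submodule.mem_map_of_mem ⟨hf, f_last⟩)
    have projW_f : projW d f = 0 := by
      rw [← Sum.elim_comp_inl_inr (projW d f), f_inl, f_inr, mulVec_zero, Sum.elim_zero_zero]
    rw [inf_span_e0_eq_bot_iff.1 h_e0 f hf projW_f f_last, map_zero]
  have surj (a : Fin d ⊕ Unit → ℂ) : ∃ g ∈ F.map e.toLinearMap, g ∘ Sum.inr = a := by
    obtain ⟨f, hf, hfa⟩ := sup_Wsub_eq_top_iff.1 hW (a (Sum.inr ()))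
    obtain ⟨k, ⟨hk, hkW : k (Sum.inr (Sum.inr ())) = 0⟩, hka⟩ :=
      hτ₀.ge (sumElim_mem_matrixGraph τ₀ (a ∘ Sum.inl - projW d f ∘ Sum.inr))
    have sum_inr : projW d (k + f) ∘ Sum.inr = a ∘ Sum.inl := by
      rw [map_add, hka]
      exact sub_add_cancel (a ∘ Sum.inl) (projW d f ∘ Sum.inr)
    have sum_last : (k + f) (Sum.inr (Sum.inr ())) = a (Sum.inr ()) := by
      rw [Pi.add_apply, hkW, hfa, zero_add]
    refine ⟨e (k + f), Submodule.mem_map_of_mem (F.add_mem hk hf), ?_⟩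
    rw [e_inr, sum_inr, sum_last]
    exact Sum.elim_comp_inl_inr a
  obtain ⟨A, hA⟩ := exists_matrixGraph_eq inj surj
  obtain ⟨τ, u, v, w, rfl⟩ := exists_topBlock_eq A
  refine ⟨τ, u, v, w, ?_⟩
  rw [Phi_eq_comap, hA]
  exact Submodule.comap_map_eq_of_injective e.injective F

end Phi

theorem phi_injective_image_general (d : ℕ) :
    (∀ (τ : Matrix (Fin d) (Fin d) ℂ) (u v : Fin d → ℂ) (w : ℂ)
        (τ' : Matrix (Fin d) (Fin d) ℂ) (u' v' : Fin d → ℂ) (w' : ℂ),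
        Phi d τ u v w = Phi d τ' u' v' w' → τ = τ' ∧ u = u' ∧ v = v' ∧ w = w') ∧
    (∀ F : Submodule ℂ (V2 d),
        (F ⊓ Submodule.span ℂ {e0 d} = ⊥ ∧ F ⊔ Wsub d = ⊤ ∧
          Submodule.map (projW d) (F ⊓ Wsub d) ∈ DPsi d) ↔
        ∃ τ ∈ Siegel d, ∃ u v w, Phi d τ u v w = F) := by
  refine ⟨fun _ _ _ _ _ _ _ _ => Phi_inj.1, fun F => ⟨?_, ?_⟩⟩
  · rintro ⟨h_e0, hW, hD⟩
    obtain ⟨τ₀, hτ₀⟩ := exists_matrixGraph_eq_of_mem_DPsi hD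
    obtain ⟨τ, u, v, w, rfl⟩ := exists_Phi_eq h_e0 hW hτ₀.symm
    rw [map_projW_Phi_inf_Wsub, matrixGraph_mem_DPsi_iff] at hD
    exact ⟨τ, hD, u, v, w, rfl⟩
  · rintro ⟨τ, hτ, u, v, w, rfl⟩
    exact ⟨Phi_inf_span_e0 τ u v w, Phi_sup_Wsub τ u v w,
      map_projW_Phi_inf_Wsub τ u v w ▸ matrixGraph_mem_DPsi_iff.2 hτ⟩

/-- Proposition 4.1: `Φ` is injective on `H_d × M_{1,d}(ℂ) × M_{d,1}(ℂ) × ℂ`, and its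
image is the set of subspaces `F` with `F ∩ ℂe₀ = 0`, `F + W = ℂ^{2d+2}` and
`π(F ∩ W) ∈ D_Ψ`. -/
theorem phi_injective_image (d : ℕ) (hd : 1 ≤ d) :
    (∀ τ ∈ Siegel d, ∀ (u v : Fin d → ℂ) (w : ℂ), ∀ τ' ∈ Siegel d,
        ∀ (u' v' : Fin d → ℂ) (w' : ℂ),
        Phi d τ u v w = Phi d τ' u' v' w' → τ = τ' ∧ u = u' ∧ v = v' ∧ w = w') ∧
    (∀ F : Submodule ℂ (V2 d),
        (F ⊓ Submodule.span ℂ {e0 d} = ⊥ ∧ F ⊔ Wsub d = ⊤ ∧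
          Submodule.map (projW d) (F ⊓ Wsub d) ∈ DPsi d) ↔
        ∃ τ ∈ Siegel d, ∃ u v w, Phi d τ u v w = F) :=
  ⟨fun τ _ u v w τ' _ u' v' w' => (phi_injective_image_general d).1 τ u v w τ' u' v' w',
    (phi_injective_image_general d).2⟩
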